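/- Let X be a Banach space, U a normed linear space, T(t), t ≥ 0, a C0-semigroup on X, and f : U → X a continuous map for which there is a class-K function γ with ‖f(v)‖_X ≤ γ(‖v‖_U) for all v ∈ U. For a bounded continuous input u : [0,∞) → U and x₀ ∈ X define the mild solution φ(t,x₀,u) = T(t)x₀ + ∫₀^t T(t−r) f(u(r)) dr (Bochner integral). Then the following are equivalent: (i) there exists β of class KL such that ‖φ(t,x₀,0)‖_X ≤ β(‖x₀‖_X, t) for all x₀, t (0-UGASx); (ii) there exist M, a > 0 with ‖φ(t,x₀,0)‖_X ≤ M e^{−at} ‖x₀‖_X for all x₀, t (exponential 0-UGASx); (iii) there exist β of class KL and γ̂ of class K such that ‖φ(t,x₀,u)‖_X ≤ β(‖x₀‖_X, t) + γ̂( sup_{s≥0} ‖u(s)‖_U ) for all x₀, all bounded continuous u and all t ≥ 0 (ISS); (iv) there exist M, a > 0 and γ̂ of class K such that ‖φ(t,x₀,u)‖_X ≤ M e^{−at} ‖x₀‖_X + γ̂( sup_{s≥0} ‖u(s)‖_U ) for all x₀, u, t (exponential ISS). -/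

import Mathlib

open Filter Set MeasureTheory intervalIntegral

/-- A function of class `K`: continuous on `[0,∞)`, strictly increasing there, zero at zero. -/
def ClassK (γ : ℝ → ℝ) : Prop :=
  ContinuousOn γ (Ici 0) ∧ StrictMonoOn γ (Ici 0) ∧ γ 0 = 0

/-- A function of class `KL`. -/
def ClassKL (β : ℝ → ℝ → ℝ) : Prop :=
  (∀ t ≥ (0:ℝ), ClassK fun r => β r t) ∧
  (∀ r > (0:ℝ), ContinuousOn (β r) (Ici 0) ∧ AntitoneOn (β r) (Ici 0) ∧
      Tendsto (β r) atTop (nhds 0))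

/-- An admissible input: a bounded continuous function `[0,∞) → U`. -/
def IsInput {U : Type*} [NormedAddCommGroup U] (u : ℝ → U) : Prop :=
  ContinuousOn u (Ici 0) ∧ BddAbove ((fun s => ‖u s‖) '' Ici 0)

/-- The norm `‖u‖_{U_c} = sup_{s ≥ 0} ‖u s‖` on the space of inputs. -/
noncomputable def inputNorm {U : Type*} [NormedAddCommGroup U] (u : ℝ → U) : ℝ :=
  sSup ((fun s => ‖u s‖) '' Ici 0)

/-!
Linearity turns a `KL` bound `‖T t x‖ ≤ β ‖x‖ t` into `‖T t‖ ≤ β 1 t`, so the operator norm is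
bounded and eventually below `1`; being submultiplicative along the semigroup, it then decays
exponentially. Under such a decay the convolution `∫₀ᵗ T (t - r) f (u r) dr` is at most `M / a`
times the supremum of `‖f ∘ u‖`, which is controlled by `γ (inputNorm u)`.
-/

namespace ClassK

variable {γ : ℝ → ℝ}

theorem monotoneOn (hγ : ClassK γ) : MonotoneOn γ (Ici 0) :=
  hγ.2.1.monotoneOn

theorem const_mul (hγ : ClassK γ) {c : ℝ} (hc : 0 < c) : ClassK fun r => c * γ r :=
  ⟨continuousOn_const.mul hγ.1,
    fun _ hr _ hs hrs => mul_lt_mul_of_pos_left (hγ.2.1 hr hs hrs) hc,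
    by simp only [hγ.2.2, mul_zero]⟩

end ClassK

theorem classK_id : ClassK fun r => r :=
  ⟨continuousOn_id, strictMonoOn_id, rfl⟩

theorem classKL_mul_exp_mul {M a : ℝ} (hM : 0 < M) (ha : 0 < a) :
    ClassKL fun r t => M * Real.exp (-a * t) * r := by
  refine ⟨fun t _ => classK_id.const_mul (by positivity), fun r hr => ⟨by fun_prop, ?_, ?_⟩⟩
  · intro s _ t _ hst
    have hexp : Real.exp (-a * t) ≤ Real.exp (-a * s) :=
      Real.exp_le_exp.mpr (mul_le_mul_of_nonpos_left hst (neg_nonpos.mpr ha.le))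
    dsimp only
    gcongr
  · have hexp : Tendsto (fun t => Real.exp (-a * t)) atTop (nhds 0) :=
      Real.tendsto_exp_atBot.comp
        (tendsto_id.const_mul_atTop_of_neg (neg_lt_zero.mpr ha))
    simpa only [mul_zero, zero_mul] using (hexp.const_mul M).mul_const r

section Input

variable {U : Type*} [NormedAddCommGroup U]

theorem IsInput.norm_le_inputNorm {u : ℝ → U} (hu : IsInput u) {s : ℝ} (hs : 0 ≤ s) :
    ‖u s‖ ≤ inputNorm u :=
  le_csSup hu.2 ⟨s, hs, rfl⟩

theorem isInput_zero : IsInput fun _ : ℝ => (0 : U) :=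
  ⟨continuousOn_const, ⟨‖(0 : U)‖, forall_mem_image.mpr fun _ _ => le_rfl⟩⟩

theorem inputNorm_zero : inputNorm (fun _ : ℝ => (0 : U)) = 0 := by
  rw [inputNorm, nonempty_Ici.image_const, csSup_singleton, norm_zero]

theorem map_zero_of_norm_le_classK {X : Type*} [NormedAddCommGroup X] {f : U → X} {γ : ℝ → ℝ}
    (hγ : ClassK γ) (hfb : ∀ v : U, ‖f v‖ ≤ γ ‖v‖) : f 0 = 0 :=
  norm_le_zero_iff.mp (by simpa only [norm_zero, hγ.2.2] using hfb 0)

end Input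

section Stability

variable {X U : Type*} [NormedAddCommGroup X]

/-- Uniform global asymptotic stability at zero input (0-UGASx) of a system with flow
`φ t x₀ u`. -/
def IsZeroUGAS [Zero U] (φ : ℝ → X → (ℝ → U) → X) : Prop :=
  ∃ β, ClassKL β ∧ ∀ x₀ : X, ∀ t ≥ (0 : ℝ), ‖φ t x₀ (fun _ => 0)‖ ≤ β ‖x₀‖ t

/-- Exponential 0-UGASx: the decay at zero input is exponential and linear in the initial state. -/
def IsExpZeroUGAS [Zero U] (φ : ℝ → X → (ℝ → U) → X) : Prop :=
  ∃ M a : ℝ, 0 < M ∧ 0 < a ∧ ∀ x₀ : X, ∀ t ≥ (0 : ℝ),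
    ‖φ t x₀ (fun _ => 0)‖ ≤ M * Real.exp (-a * t) * ‖x₀‖

variable [NormedAddCommGroup U]

/-- Input-to-state stability (ISS) with respect to bounded continuous inputs. -/
def IsISS (φ : ℝ → X → (ℝ → U) → X) : Prop :=
  ∃ β γ, ClassKL β ∧ ClassK γ ∧ ∀ x₀ : X, ∀ u : ℝ → U, IsInput u → ∀ t ≥ (0 : ℝ),
    ‖φ t x₀ u‖ ≤ β ‖x₀‖ t + γ (inputNorm u)

/-- Exponential ISS: input-to-state stability whose `KL` part is `M * exp (-a * t) * ‖x₀‖`. -/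
def IsExpISS (φ : ℝ → X → (ℝ → U) → X) : Prop :=
  ∃ M a : ℝ, ∃ γ : ℝ → ℝ, 0 < M ∧ 0 < a ∧ ClassK γ ∧
    ∀ x₀ : X, ∀ u : ℝ → U, IsInput u → ∀ t ≥ (0 : ℝ),
      ‖φ t x₀ u‖ ≤ M * Real.exp (-a * t) * ‖x₀‖ + γ (inputNorm u)

variable {φ : ℝ → X → (ℝ → U) → X}

theorem IsExpISS.isISS : IsExpISS φ → IsISS φ := by
  rintro ⟨M, a, γ, hM, ha, hγ, hφ⟩
  exact ⟨_, γ, classKL_mul_exp_mul hM ha, hγ, hφ⟩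

theorem IsISS.isZeroUGAS : IsISS φ → IsZeroUGAS φ := by
  rintro ⟨β, γ, hβ, hγ, hφ⟩
  refine ⟨β, hβ, fun x₀ t ht => ?_⟩
  simpa only [inputNorm_zero, hγ.2.2, add_zero] using hφ x₀ _ isInput_zero t ht

end Stability

section Submultiplicative

variable {g : ℝ → ℝ}

theorem le_pow_mul_of_submultiplicative (hg0 : ∀ t ≥ (0 : ℝ), 0 ≤ g t)
    (hg : ∀ t ≥ (0 : ℝ), ∀ s ≥ (0 : ℝ), g (t + s) ≤ g t * g s)
    {τ s : ℝ} (hτ : 0 ≤ τ) (hs : 0 ≤ s) (n : ℕ) : g (n * τ + s) ≤ g τ ^ n * g s := by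
  induction n with
  | zero => simp only [Nat.cast_zero, zero_mul, zero_add, pow_zero, one_mul, le_refl]
  | succ n ih =>
    calc g ((n + 1 : ℕ) * τ + s) = g (τ + (n * τ + s)) := by push_cast; ring_nf
      _ ≤ g τ * g (n * τ + s) := hg τ hτ _ (by positivity)
      _ ≤ g τ * (g τ ^ n * g s) := mul_le_mul_of_nonneg_left ih (hg0 τ hτ)
      _ = g τ ^ (n + 1) * g s := by ring

theorem exists_le_mul_exp_of_submultiplicative (hg0 : ∀ t ≥ (0 : ℝ), 0 ≤ g t)
    (hg : ∀ t ≥ (0 : ℝ), ∀ s ≥ (0 : ℝ), g (t + s) ≤ g t * g s)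
    {τ C : ℝ} (hτ : 0 < τ) (hgτ : g τ < 1) (hC : ∀ s ∈ Ico 0 τ, g s ≤ C) :
    ∃ M a : ℝ, 0 < M ∧ 0 < a ∧ ∀ t ≥ (0 : ℝ), g t ≤ M * Real.exp (-a * t) := by
  -- `g τ` may vanish, so the rate is read off a number strictly between `g τ` and `1`.
  obtain ⟨q, hgq, hq1⟩ := exists_between hgτ
  have hq0 : 0 < q := (hg0 τ hτ.le).trans_lt hgq
  obtain ⟨b, hb, rfl⟩ : ∃ b > 0, Real.exp (-b) = q :=
    ⟨-Real.log q, neg_pos.mpr (Real.log_neg hq0 hq1), by rw [neg_neg, Real.exp_log hq0]⟩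
  have hC0 : 0 ≤ C := (hg0 0 le_rfl).trans (hC 0 ⟨le_rfl, hτ⟩)
  refine ⟨(C + 1) * Real.exp b, b / τ, by positivity, by positivity, fun t ht => ?_⟩
  set n := ⌊t / τ⌋₊
  have hn : n * τ ≤ t := (le_div_iff₀ hτ).mp (Nat.floor_le (by positivity))
  have hn' : t / τ < n + 1 := Nat.lt_floor_add_one _
  have hs : t - n * τ ∈ Ico 0 τ :=
    ⟨sub_nonneg.mpr hn, by linarith [(div_lt_iff₀ hτ).mp hn']⟩
  have hexp : Real.exp (-b) ^ n ≤ Real.exp b * Real.exp (-(b / τ) * t) := by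
    rw [← Real.exp_nat_mul, ← Real.exp_add, Real.exp_le_exp]
    calc n * -b ≤ (t / τ - 1) * -b :=
          mul_le_mul_of_nonpos_right (by linarith) (neg_nonpos.mpr hb.le)
      _ = b + -(b / τ) * t := by ring
  calc g t = g (n * τ + (t - n * τ)) := by rw [add_sub_cancel]
    _ ≤ g τ ^ n * g (t - n * τ) := le_pow_mul_of_submultiplicative hg0 hg hτ.le hs.1 n
    _ ≤ Real.exp (-b) ^ n * (C + 1) :=
        mul_le_mul (pow_le_pow_left₀ (hg0 τ hτ.le) hgq.le n) ((hC _ hs).trans (by linarith))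
          (hg0 _ hs.1) (by positivity)
    _ ≤ Real.exp b * Real.exp (-(b / τ) * t) * (C + 1) := by gcongr
    _ = (C + 1) * Real.exp b * Real.exp (-(b / τ) * t) := by ring

end Submultiplicative

theorem integral_exp_neg_mul_sub_le {a : ℝ} (ha : 0 < a) (t : ℝ) :
    ∫ r in (0 : ℝ)..t, Real.exp (-a * (t - r)) ≤ 1 / a := by
  have heq : ∫ r in (0 : ℝ)..t, Real.exp (-a * (t - r)) = (1 - Real.exp (-a * t)) / a := by
    rw [integral_comp_sub_left (fun s => Real.exp (-a * s)), sub_self, sub_zero,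
      integral_comp_mul_left Real.exp (neg_ne_zero.mpr ha.ne'), integral_exp, mul_zero,
      Real.exp_zero, smul_eq_mul]
    ring
  rw [heq]
  gcongr
  exact sub_le_self 1 (Real.exp_pos _).le

section OperatorFamily

variable {X Y : Type*} [NormedAddCommGroup X] [NormedSpace ℝ X]
  [NormedAddCommGroup Y] [NormedSpace ℝ Y]

theorem opNorm_le_of_classK {α : ℝ → ℝ} (hα : ClassK α) {A : X →L[ℝ] Y}
    (hA : ∀ x, ‖A x‖ ≤ α ‖x‖) : ‖A‖ ≤ α 1 := by
  have hα1 : 0 ≤ α 1 :=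
    hα.2.2.ge.trans (hα.monotoneOn self_mem_Ici (mem_Ici.mpr zero_le_one) zero_le_one)
  exact ContinuousLinearMap.opNorm_le_of_unit_norm hα1 fun x hx => by simpa only [hx] using hA x

theorem exists_opNorm_le_mul_exp_of_classKL {T : ℝ → X →L[ℝ] X}
    (hTsem : ∀ t ≥ (0 : ℝ), ∀ s ≥ (0 : ℝ), T (t + s) = (T t).comp (T s))
    {β : ℝ → ℝ → ℝ} (hβ : ClassKL β) (hT : ∀ x : X, ∀ t ≥ (0 : ℝ), ‖T t x‖ ≤ β ‖x‖ t) :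
    ∃ M a : ℝ, 0 < M ∧ 0 < a ∧ ∀ t ≥ (0 : ℝ), ‖T t‖ ≤ M * Real.exp (-a * t) := by
  obtain ⟨-, hanti, hlim⟩ := hβ.2 1 one_pos
  have hTβ : ∀ t ≥ (0 : ℝ), ‖T t‖ ≤ β 1 t := fun t ht =>
    opNorm_le_of_classK (hβ.1 t ht) fun x => hT x t ht
  obtain ⟨τ, hβτ, hτ⟩ : ∃ τ, β 1 τ < 1 ∧ 0 < τ :=
    ((hlim.eventually_lt_const one_pos).and (eventually_gt_atTop 0)).exists
  have hsub : ∀ t ≥ (0 : ℝ), ∀ s ≥ (0 : ℝ), ‖T (t + s)‖ ≤ ‖T t‖ * ‖T s‖ := fun t ht s hs =>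
    hTsem t ht s hs ▸ (T t).opNorm_comp_le (T s)
  exact exists_le_mul_exp_of_submultiplicative (fun t _ => norm_nonneg (T t)) hsub hτ
    ((hTβ τ hτ.le).trans_lt hβτ)
    fun s hs => (hTβ s hs.1).trans (hanti self_mem_Ici hs.1 hs.1)

theorem norm_integral_convolution_le {T : ℝ → X →L[ℝ] Y} {M a : ℝ} (hM : 0 ≤ M) (ha : 0 < a)
    (hT : ∀ x : X, ∀ t ≥ (0 : ℝ), ‖T t x‖ ≤ M * Real.exp (-a * t) * ‖x‖)
    {g : ℝ → X} {t G : ℝ} (ht : 0 ≤ t) (hg : ∀ r ∈ Icc 0 t, ‖g r‖ ≤ G) :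
    ‖∫ r in (0 : ℝ)..t, T (t - r) (g r)‖ ≤ M / a * G := by
  have hG : 0 ≤ G := (norm_nonneg _).trans (hg 0 ⟨le_rfl, ht⟩)
  have hbound : ∀ r ∈ Ioc 0 t, ‖T (t - r) (g r)‖ ≤ M * G * Real.exp (-a * (t - r)) :=
    fun r hr => calc
      ‖T (t - r) (g r)‖ ≤ M * Real.exp (-a * (t - r)) * ‖g r‖ := hT _ _ (sub_nonneg.mpr hr.2)
      _ ≤ M * Real.exp (-a * (t - r)) * G := by gcongr; exact hg r ⟨hr.1.le, hr.2⟩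
      _ = M * G * Real.exp (-a * (t - r)) := by ring
  have hint : IntervalIntegrable (fun r => M * G * Real.exp (-a * (t - r))) volume 0 t :=
    Continuous.intervalIntegrable (by fun_prop) _ _
  calc ‖∫ r in (0 : ℝ)..t, T (t - r) (g r)‖
      ≤ ∫ r in (0 : ℝ)..t, M * G * Real.exp (-a * (t - r)) :=
        norm_integral_le_of_norm_le ht (Eventually.of_forall hbound) hint
    _ = M * G * ∫ r in (0 : ℝ)..t, Real.exp (-a * (t - r)) := integral_const_mul _ _
    _ ≤ M * G * (1 / a) := by gcongr; exact integral_exp_neg_mul_sub_le ha t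
    _ = M / a * G := by ring

end OperatorFamily

section MildSolution

variable {X U : Type*} [NormedAddCommGroup X] [NormedSpace ℝ X]

/-- The mild solution at time `t` of `ẋ = A x + f(u)`, `x(0) = x₀`, where `A` generates `T`.
The integral is the Bochner integral. -/
noncomputable def mildSolution (T : ℝ → X →L[ℝ] X) (f : U → X) (t : ℝ) (x₀ : X) (u : ℝ → U) : X :=
  T t x₀ + ∫ r in (0 : ℝ)..t, T (t - r) (f (u r))

variable {T : ℝ → X →L[ℝ] X} {f : U → X}

theorem mildSolution_zero_input [Zero U] (hf0 : f 0 = 0) (t : ℝ) (x₀ : X) :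
    mildSolution T f t x₀ (fun _ => 0) = T t x₀ := by
  simp only [mildSolution, hf0, map_zero, intervalIntegral.integral_zero, add_zero]

theorem IsZeroUGAS.isExpZeroUGAS_mildSolution [Zero U] (hf0 : f 0 = 0)
    (hTsem : ∀ t ≥ (0 : ℝ), ∀ s ≥ (0 : ℝ), T (t + s) = (T t).comp (T s)) :
    IsZeroUGAS (mildSolution T f) → IsExpZeroUGAS (mildSolution T f) := by
  simp only [IsZeroUGAS, IsExpZeroUGAS, mildSolution_zero_input hf0]
  rintro ⟨β, hβ, hT⟩
  obtain ⟨M, a, hM, ha, hTexp⟩ := exists_opNorm_le_mul_exp_of_classKL hTsem hβ hT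
  exact ⟨M, a, hM, ha, fun x t ht => (T t).le_of_opNorm_le (hTexp t ht) x⟩

variable [NormedAddCommGroup U] {γ : ℝ → ℝ}

theorem IsExpZeroUGAS.isExpISS_mildSolution (hγ : ClassK γ) (hfb : ∀ v : U, ‖f v‖ ≤ γ ‖v‖) :
    IsExpZeroUGAS (mildSolution T f) → IsExpISS (mildSolution T f) := by
  simp only [IsExpZeroUGAS, mildSolution_zero_input (map_zero_of_norm_le_classK hγ hfb)]
  rintro ⟨M, a, hM, ha, hT⟩
  refine ⟨M, a, fun r => M / a * γ r, hM, ha, hγ.const_mul (div_pos hM ha),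
    fun x₀ u hu t ht => norm_add_le_of_le (hT x₀ t ht) ?_⟩
  have hfu : ∀ r ≥ (0 : ℝ), ‖f (u r)‖ ≤ γ (inputNorm u) := fun r hr =>
    have hur := hu.norm_le_inputNorm hr
    (hfb _).trans (hγ.monotoneOn (norm_nonneg _) ((norm_nonneg _).trans hur) hur)
  exact norm_integral_convolution_le hM.le ha hT ht fun r hr => hfu r hr.1

theorem stmt2_general [CompleteSpace X]
    (hTsem : ∀ t ≥ (0 : ℝ), ∀ s ≥ (0 : ℝ), T (t + s) = (T t).comp (T s))
    (_hTcont : ∀ x : X, ContinuousOn (fun t => T t x) (Ici 0))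
    (_hf : Continuous f) (hγ : ClassK γ) (hfb : ∀ v : U, ‖f v‖ ≤ γ ‖v‖) :
    List.TFAE [IsZeroUGAS (mildSolution T f), IsExpZeroUGAS (mildSolution T f),
      IsISS (mildSolution T f), IsExpISS (mildSolution T f)] := by
  tfae_have 1 → 2 :=
    IsZeroUGAS.isExpZeroUGAS_mildSolution (map_zero_of_norm_le_classK hγ hfb) hTsem
  tfae_have 2 → 4 := IsExpZeroUGAS.isExpISS_mildSolution hγ hfb
  tfae_have 4 → 3 := IsExpISS.isISS
  tfae_have 3 → 1 := IsISS.isZeroUGAS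
  tfae_finish

end MildSolution

/-- For the linear system `ẋ = Ax + f(u)` with mild solutions
`φ(t,x₀,u) = T(t)x₀ + ∫₀ᵗ T(t-r) f(u(r)) dr`, the following are equivalent:
(i) 0-UGASx; (ii) exponential 0-UGASx; (iii) ISS; (iv) exponential ISS. -/
theorem stmt2 {X U : Type*} [NormedAddCommGroup X] [NormedSpace ℝ X] [CompleteSpace X]
    [NormedAddCommGroup U] [NormedSpace ℝ U]
    (T : ℝ → X →L[ℝ] X)
    (hT0 : T 0 = ContinuousLinearMap.id ℝ X)
    (hTsem : ∀ t ≥ (0:ℝ), ∀ s ≥ (0:ℝ), T (t + s) = (T t).comp (T s))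
    (hTcont : ∀ x : X, ContinuousOn (fun t => T t x) (Ici 0))
    (f : U → X) (hf : Continuous f)
    (γ : ℝ → ℝ) (hγ : ClassK γ) (hfb : ∀ v : U, ‖f v‖ ≤ γ ‖v‖)
    (φ : ℝ → X → (ℝ → U) → X)
    (hφ : ∀ (t : ℝ) (x₀ : X) (u : ℝ → U),
        φ t x₀ u = T t x₀ + ∫ r in (0:ℝ)..t, T (t - r) (f (u r))) :
    List.TFAE [
      (∃ β, ClassKL β ∧ ∀ x₀ : X, ∀ t ≥ (0:ℝ),
          ‖φ t x₀ (fun _ => 0)‖ ≤ β ‖x₀‖ t),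
      (∃ M a : ℝ, 0 < M ∧ 0 < a ∧ ∀ x₀ : X, ∀ t ≥ (0:ℝ),
          ‖φ t x₀ (fun _ => 0)‖ ≤ M * Real.exp (-a * t) * ‖x₀‖),
      (∃ β γ', ClassKL β ∧ ClassK γ' ∧ ∀ x₀ : X, ∀ u : ℝ → U, IsInput u → ∀ t ≥ (0:ℝ),
          ‖φ t x₀ u‖ ≤ β ‖x₀‖ t + γ' (inputNorm u)),
      (∃ M a : ℝ, ∃ γ' : ℝ → ℝ, 0 < M ∧ 0 < a ∧ ClassK γ' ∧
          ∀ x₀ : X, ∀ u : ℝ → U, IsInput u → ∀ t ≥ (0:ℝ),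
            ‖φ t x₀ u‖ ≤ M * Real.exp (-a * t) * ‖x₀‖ + γ' (inputNorm u))] := by
  obtain rfl : φ = mildSolution T f := funext fun t => funext fun x₀ => funext (hφ t x₀)
  exact stmt2_general hTsem hTcont hf hγ hfb
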